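/- Vortex solutions are minimizing and stable solutions of the Yang–Mills–Higgs equations: if a periodic configuration (u, A) satisfies the vortex equations or the anti-vortex equations, then (u, A) satisfies the YMH equations, E_ε(u, A) = 0, E_ε(u, A) ≤ E_ε(w, B) for every periodic configuration (w, B), and (u, A) is stable. -/

import Mathlib

open MeasureTheory Complex

noncomputable section

/-- Partial derivative in the first coordinate direction. -/
def pd1 {E : Type*} [NormedAddCommGroup E] [NormedSpace ℝ E] (f : ℝ × ℝ → E) (x : ℝ × ℝ) : E :=
  fderiv ℝ f x (1, 0)

/-- Partial derivative in the second coordinate direction. -/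
def pd2 {E : Type*} [NormedAddCommGroup E] [NormedSpace ℝ E] (f : ℝ × ℝ → E) (x : ℝ × ℝ) : E :=
  fderiv ℝ f x (0, 1)

/-- First covariant derivative `D₁f = ∂₁f − iA₁f`. -/
def D1 (A1 : ℝ × ℝ → ℝ) (f : ℝ × ℝ → ℂ) (x : ℝ × ℝ) : ℂ :=
  pd1 f x - Complex.I * (A1 x) * f x

/-- Second covariant derivative `D₂f = ∂₂f − iA₂f`. -/
def D2 (A2 : ℝ × ℝ → ℝ) (f : ℝ × ℝ → ℂ) (x : ℝ × ℝ) : ℂ :=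
  pd2 f x - Complex.I * (A2 x) * f x

/-- Curvature function `F = ∂₁A₂ − ∂₂A₁`. -/
def curv (A1 A2 : ℝ × ℝ → ℝ) (x : ℝ × ℝ) : ℝ := pd1 A2 x - pd2 A1 x

/-- `h = (1 − |u|²)/(2ε²)`. -/
def hfun (ε : ℝ) (u : ℝ × ℝ → ℂ) (x : ℝ × ℝ) : ℝ := (1 - ‖u x‖ ^ 2) / (2 * ε ^ 2)

/-- `σ₊ = D₁u + iD₂u`. -/
def sigP (u : ℝ × ℝ → ℂ) (A1 A2 : ℝ × ℝ → ℝ) (x : ℝ × ℝ) : ℂ :=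
  D1 A1 u x + Complex.I * D2 A2 u x

/-- `σ₋ = D₁u − iD₂u`. -/
def sigM (u : ℝ × ℝ → ℂ) (A1 A2 : ℝ × ℝ → ℝ) (x : ℝ × ℝ) : ℂ :=
  D1 A1 u x - Complex.I * D2 A2 u x

/-- The Yang--Mills--Higgs energy over the fundamental domain `[0,1]²`. -/
def energy (ε : ℝ) (u : ℝ × ℝ → ℂ) (A1 A2 : ℝ × ℝ → ℝ) : ℝ :=
  ∫ x in Set.Icc (0:ℝ) 1 ×ˢ Set.Icc (0:ℝ) 1,
    (ε ^ 2 * curv A1 A2 x ^ 2 + ‖D1 A1 u x‖ ^ 2 + ‖D2 A2 u x‖ ^ 2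
      + (1 - ‖u x‖ ^ 2) ^ 2 / (4 * ε ^ 2))

/-- `ℤ²`-periodicity. -/
def Periodic2 {E : Type*} (f : ℝ × ℝ → E) : Prop :=
  ∀ x : ℝ × ℝ, f (x.1 + 1, x.2) = f x ∧ f (x.1, x.2 + 1) = f x

/-- The Yang--Mills--Higgs equations on all of `ℝ²`. -/
def IsYMH (ε : ℝ) (u : ℝ × ℝ → ℂ) (A1 A2 : ℝ × ℝ → ℝ) : Prop :=
  (∀ x, -(D1 A1 (D1 A1 u) x + D2 A2 (D2 A2 u) x) = (hfun ε u x : ℂ) * u x) ∧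
  (∀ x, ε ^ 2 * pd2 (curv A1 A2) x = ((starRingEnd ℂ) (u x) * D1 A1 u x).im) ∧
  (∀ x, ε ^ 2 * pd1 (curv A1 A2) x = -((starRingEnd ℂ) (u x) * D2 A2 u x).im)

/-- The Yang--Mills--Higgs equations on an open set `U ⊆ ℝ²`. -/
def IsYMHOn (ε : ℝ) (u : ℝ × ℝ → ℂ) (A1 A2 : ℝ × ℝ → ℝ) (U : Set (ℝ × ℝ)) : Prop :=
  (∀ x ∈ U, -(D1 A1 (D1 A1 u) x + D2 A2 (D2 A2 u) x) = (hfun ε u x : ℂ) * u x) ∧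
  (∀ x ∈ U, ε ^ 2 * pd2 (curv A1 A2) x = ((starRingEnd ℂ) (u x) * D1 A1 u x).im) ∧
  (∀ x ∈ U, ε ^ 2 * pd1 (curv A1 A2) x = -((starRingEnd ℂ) (u x) * D2 A2 u x).im)

/-- Stability: nonnegative second variation of the energy along all smooth periodic
variations of the section and the connection. -/
def Stable (ε : ℝ) (u : ℝ × ℝ → ℂ) (A1 A2 : ℝ × ℝ → ℝ) : Prop :=
  ∀ v : ℝ × ℝ → ℂ, ∀ a1 a2 : ℝ × ℝ → ℝ,
    ContDiff ℝ (⊤ : ℕ∞) v → Periodic2 v → ContDiff ℝ (⊤ : ℕ∞) a1 → Periodic2 a1 →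
    ContDiff ℝ (⊤ : ℕ∞) a2 → Periodic2 a2 →
    0 ≤ iteratedDeriv 2 (fun t : ℝ =>
      energy ε (fun x => u x + t • v x)
        (fun x => A1 x + t * a1 x) (fun x => A2 x + t * a2 x)) 0

/-!
The argument is Bogomolny's. For a sign `s = ±1`, completing squares in the energy density gives
`ε²F² + |D₁u|² + |D₂u|² + (1 - |u|²)²/(4ε²) = |D₁u + s i D₂u|² + ε²(F - s h)² + s(F + curl j)`,
where `j = Im(ū Du)`. On the trivial bundle both `A` and `j` are periodic, so `F + curl j` has
integral zero and the energy of a vortex solution vanishes. As the energy is nonnegative, such a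
solution is a minimizer, and minimizers are stable. The Yang–Mills–Higgs equations are a local
consequence of the vortex equations and the commutator formula `[D₁, D₂] = -iF`.
-/

open scoped ComplexConjugate
open Function Set

section CovariantDerivative

variable {T V : Type*} [NormedAddCommGroup T] [NormedSpace ℝ T]
  [NormedAddCommGroup V] [NormedSpace ℝ V]

/-- Covariant derivative in the direction `e` of a section of the trivial line bundle over `V`,
where `a` is the component along `e` of the connection form. It specializes definitionally to
`D1` for `e = (1, 0)` and to `D2` for `e = (0, 1)`. -/
def covDeriv (a : V → ℝ) (e : V) (f : V → ℂ) (x : V) : ℂ :=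
  fderiv ℝ f x e - I * a x * f x

/-- The component along `e` of the supercurrent `Im(ū Du)`, whose curl is the exact term in
Bogomolny's identity. -/
def current (a : V → ℝ) (e : V) (f : V → ℂ) (x : V) : ℝ :=
  (conj (f x) * covDeriv a e f x).im

theorem covDeriv_const_mul (a : V → ℝ) (e : V) (c : ℂ) (f : V → ℂ) (x : V) :
    covDeriv a e (fun y => c * f y) x = c * covDeriv a e f x := by
  have hderiv : fderiv ℝ (fun y => c * f y) = c • fderiv ℝ f := fderiv_const_smul_field c
  simp only [covDeriv, hderiv, Pi.smul_apply, smul_apply, smul_eq_mul]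
  ring

theorem contDiff_uncurry_fderiv_apply {E : Type*} [NormedAddCommGroup E] [NormedSpace ℝ E]
    {f : T → V → E} {m n : WithTop ℕ∞} (hf : ContDiff ℝ n (uncurry f)) (hmn : m + 1 ≤ n) (e : V) :
    ContDiff ℝ m (uncurry fun t x => fderiv ℝ (f t) x e) := by
  have hfamily : ContDiff ℝ n (uncurry fun p : T × V => f p.1) :=
    hf.comp (contDiff_fst.fst.prodMk contDiff_snd)
  exact (hfamily.fderiv contDiff_snd hmn).clm_apply contDiff_const

theorem contDiff_uncurry_covDeriv {a : T → V → ℝ} {f : T → V → ℂ} {m n : WithTop ℕ∞}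
    (ha : ContDiff ℝ m (uncurry a)) (hf : ContDiff ℝ n (uncurry f)) (hmn : m + 1 ≤ n) (e : V) :
    ContDiff ℝ m (uncurry fun t => covDeriv (a t) e (f t)) := by
  have hf₀ : ContDiff ℝ m (uncurry f) := hf.of_le (le_self_add.trans hmn)
  exact (contDiff_uncurry_fderiv_apply hf hmn e).sub
    ((contDiff_const.mul (ofRealCLM.contDiff.comp ha)).mul hf₀)

theorem contDiff_covDeriv {a : V → ℝ} {f : V → ℂ} {m n : WithTop ℕ∞}
    (ha : ContDiff ℝ m a) (hf : ContDiff ℝ n f) (hmn : m + 1 ≤ n) (e : V) :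
    ContDiff ℝ m (covDeriv a e f) :=
  (contDiff_uncurry_covDeriv (T := ℝ) (a := fun _ => a) (f := fun _ => f)
    (ha.comp contDiff_snd) (hf.comp contDiff_snd) hmn e).comp
      (contDiff_const (c := 0) |>.prodMk contDiff_id)

theorem contDiff_current {a : V → ℝ} {f : V → ℂ} {m n : WithTop ℕ∞}
    (ha : ContDiff ℝ m a) (hf : ContDiff ℝ n f) (hmn : m + 1 ≤ n) (e : V) :
    ContDiff ℝ m (current a e f) :=
  imCLM.contDiff.comp <|
    (conjCLE.contDiff.comp (hf.of_le (le_self_add.trans hmn))).mul (contDiff_covDeriv ha hf hmn e)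

theorem fderiv_conj_mul {f g : V → ℂ} {x : V} (hf : DifferentiableAt ℝ f x)
    (hg : DifferentiableAt ℝ g x) (a : V → ℝ) (e : V) :
    fderiv ℝ (fun y => conj (f y) * g y) x e =
      conj (covDeriv a e f x) * g x + conj (f x) * covDeriv a e g x := by
  have hconj : HasFDerivAt (fun y => conj (f y)) ((conjCLE : ℂ →L[ℝ] ℂ) ∘L fderiv ℝ f x) x :=
    conjCLE.hasFDerivAt.comp x hf.hasFDerivAt
  rw [(hconj.fun_mul hg.hasFDerivAt).fderiv]
  -- The connection terms cancel since `I * a x` is purely imaginary.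
  simp only [covDeriv, add_apply, smul_apply, smul_eq_mul, ContinuousLinearMap.comp_apply,
    ContinuousLinearEquiv.coe_coe, ContinuousAlgEquiv.coeCLE_apply, conjCAE_apply, map_sub, map_mul,
    conj_I, conj_ofReal]
  ring

theorem fderiv_im_conj_mul {f g : V → ℂ} {x : V} (hf : DifferentiableAt ℝ f x)
    (hg : DifferentiableAt ℝ g x) (a : V → ℝ) (e : V) :
    fderiv ℝ (fun y => (conj (f y) * g y).im) x e =
      (conj (covDeriv a e f x) * g x + conj (f x) * covDeriv a e g x).im := by
  have hprod : DifferentiableAt ℝ (fun y => conj (f y) * g y) x :=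
    (conjCLE.differentiableAt.comp x hf).mul hg
  rw [← fderiv_conj_mul hf hg a e]
  exact congrArg (· e) (imCLM.hasFDerivAt.comp x hprod.hasFDerivAt).fderiv

theorem fderiv_norm_sq_eq_covDeriv {f : V → ℂ} {x : V} (hf : DifferentiableAt ℝ f x)
    (a : V → ℝ) (e : V) :
    fderiv ℝ (fun y => ‖f y‖ ^ 2) x e = 2 * (conj (f x) * covDeriv a e f x).re := by
  rw [hf.hasFDerivAt.norm_sq.fderiv]
  simp only [covDeriv, smul_apply, nsmul_eq_mul, ContinuousLinearMap.comp_apply, coe_innerSL_apply,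
    Complex.inner, mul_re, mul_im, sub_re, sub_im, conj_re, conj_im, I_re, I_im, ofReal_re,
    ofReal_im, Nat.cast_ofNat]
  ring

theorem fderiv_covDeriv {a : V → ℝ} {f : V → ℂ} {x : V} (ha : DifferentiableAt ℝ a x)
    (hf : ContDiff ℝ 2 f) (d e : V) :
    fderiv ℝ (covDeriv a e f) x d =
      fderiv ℝ (fderiv ℝ f) x d e - I * (fderiv ℝ a x d * f x + a x * fderiv ℝ f x d) := by
  have hf' : HasFDerivAt f (fderiv ℝ f x) x := (hf.differentiable two_ne_zero x).hasFDerivAt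
  have hf'' : HasFDerivAt (fderiv ℝ f) (fderiv ℝ (fderiv ℝ f) x) x :=
    ((hf.fderiv_right one_add_one_eq_two.le).differentiable one_ne_zero x).hasFDerivAt
  have ha' : HasFDerivAt (fun y => (a y : ℂ)) (ofRealCLM ∘L fderiv ℝ a x) x :=
    ofRealCLM.hasFDerivAt.comp x ha.hasFDerivAt
  have hcov := (hf''.clm_apply (hasFDerivAt_const e x)).sub ((ha'.const_mul I).mul hf')
  rw [show fderiv ℝ (covDeriv a e f) x = _ from hcov.fderiv]
  simp only [ContinuousLinearMap.comp_zero, zero_add, sub_apply, ContinuousLinearMap.flip_apply,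
    add_apply, smul_apply, smul_eq_mul, ContinuousLinearMap.comp_apply, ofRealCLM_apply]
  ring

theorem covDeriv_commutator {a b : V → ℝ} {f : V → ℂ} {x : V} (ha : DifferentiableAt ℝ a x)
    (hb : DifferentiableAt ℝ b x) (hf : ContDiff ℝ 2 f) (d e : V) :
    covDeriv a d (covDeriv b e f) x - covDeriv b e (covDeriv a d f) x =
      -I * (fderiv ℝ b x d - fderiv ℝ a x e) * f x := by
  have hsymm : fderiv ℝ (fderiv ℝ f) x d e = fderiv ℝ (fderiv ℝ f) x e d :=
    hf.contDiffAt.isSymmSndFDerivAt minSmoothness_of_isRCLikeNormedField.le d e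
  rw [covDeriv, covDeriv.eq_def b e (covDeriv a d f), fderiv_covDeriv hb hf,
    fderiv_covDeriv ha hf, hsymm, covDeriv, covDeriv]
  ring

theorem fderiv_current_sub_fderiv_current {a b : V → ℝ} {f : V → ℂ} (ha : ContDiff ℝ 1 a)
    (hb : ContDiff ℝ 1 b) (hf : ContDiff ℝ 2 f) (d e : V) (x : V) :
    fderiv ℝ (current b e f) x d - fderiv ℝ (current a d f) x e =
      2 * (conj (covDeriv a d f x) * covDeriv b e f x).im -
        (fderiv ℝ b x d - fderiv ℝ a x e) * ‖f x‖ ^ 2 := by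
  have hdf : DifferentiableAt ℝ f x := hf.differentiable two_ne_zero x
  have hda : DifferentiableAt ℝ (covDeriv a d f) x :=
    (contDiff_covDeriv ha hf one_add_one_eq_two.le d).differentiable one_ne_zero x
  have hdb : DifferentiableAt ℝ (covDeriv b e f) x :=
    (contDiff_covDeriv hb hf one_add_one_eq_two.le e).differentiable one_ne_zero x
  have hcomm := congrArg (fun z => (conj (f x) * z).im) <|
    covDeriv_commutator (ha.differentiable one_ne_zero x) (hb.differentiable one_ne_zero x) hf d e
  have hd : fderiv ℝ (current b e f) x d = _ := fderiv_im_conj_mul hdf hdb a d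
  have he : fderiv ℝ (current a d f) x e = _ := fderiv_im_conj_mul hdf hda b e
  rw [hd, he, ← normSq_eq_norm_sq, normSq_apply]
  simp only [mul_re, mul_im, sub_re, sub_im, add_im, neg_re, neg_im, conj_re, conj_im, I_re, I_im,
    ofReal_re, ofReal_im] at hcomm ⊢
  linear_combination hcomm

end CovariantDerivative

section Periodicity

theorem periodic_fderiv {𝕜 V E : Type*} [NontriviallyNormedField 𝕜] [NormedAddCommGroup V]
    [NormedSpace 𝕜 V] [NormedAddCommGroup E] [NormedSpace 𝕜 E] {f : V → E} {c : V}
    (hf : f.Periodic c) : (fderiv 𝕜 f).Periodic c := fun x => by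
  rw [← fderiv_comp_add_right, hf.funext]

theorem periodic2_iff {E : Type*} {f : ℝ × ℝ → E} :
    Periodic2 f ↔ f.Periodic (1, 0) ∧ f.Periodic (0, 1) := by
  simp [Periodic2, Function.Periodic, forall_and]

theorem periodic_current {V : Type*} [NormedAddCommGroup V] [NormedSpace ℝ V] {a : V → ℝ}
    {f : V → ℂ} {c : V} (ha : a.Periodic c) (hf : f.Periodic c) (e : V) :
    (current a e f).Periodic c := fun x => by
  simp only [current, covDeriv, ha x, hf x, periodic_fderiv hf x]

theorem periodic2_current {a : ℝ × ℝ → ℝ} {f : ℝ × ℝ → ℂ} (ha : Periodic2 a) (hf : Periodic2 f)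
    (e : ℝ × ℝ) : Periodic2 (current a e f) := by
  rw [periodic2_iff] at ha hf ⊢
  exact ⟨periodic_current ha.1 hf.1 e, periodic_current ha.2 hf.2 e⟩

theorem continuous_curv {B1 B2 : ℝ × ℝ → ℝ} (h1 : ContDiff ℝ 1 B1) (h2 : ContDiff ℝ 1 B2) :
    Continuous (curv B1 B2) :=
  ((h2.continuous_fderiv one_ne_zero).clm_apply continuous_const).sub
    ((h1.continuous_fderiv one_ne_zero).clm_apply continuous_const)

theorem integrableOn_unit_square {E : Type*} [NormedAddCommGroup E] {f : ℝ × ℝ → E}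
    (hf : Continuous f) : IntegrableOn f (Icc (0 : ℝ) 1 ×ˢ Icc (0 : ℝ) 1) :=
  hf.continuousOn.integrableOn_compact (isCompact_Icc.prod isCompact_Icc)

theorem integral_curv_eq_zero {B1 B2 : ℝ × ℝ → ℝ} (h1 : ContDiff ℝ 1 B1) (h2 : ContDiff ℝ 1 B2)
    (p1 : Periodic2 B1) (p2 : Periodic2 B2) :
    ∫ x in Icc (0 : ℝ) 1 ×ˢ Icc (0 : ℝ) 1, curv B1 B2 x = 0 := by
  have hint : IntegrableOn (curv B1 B2) (Icc (0 : ℝ) 1 ×ˢ Icc (0 : ℝ) 1) :=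
    integrableOn_unit_square (continuous_curv h1 h2)
  have hcurv : curv B1 B2 = fun x => fderiv ℝ B2 x (1, 0) + (-fderiv ℝ B1 x) (0, 1) :=
    funext fun x => sub_eq_add_neg _ _
  have hbottom (x : ℝ) : B1 (x, 1) = B1 (x, 0) := by simpa using (p1 (x, 0)).2
  have hleft (y : ℝ) : B2 (1, y) = B2 (0, y) := by simpa using (p2 (0, y)).1
  rw [Icc_prod_Icc, hcurv] at hint ⊢
  rw [integral_divergence_prod_Icc_of_hasFDerivAt_of_le B2 (fun x => -B1 x) (fderiv ℝ B2)
    (fun x => -fderiv ℝ B1 x) (0, 0) (1, 1) ⟨zero_le_one, zero_le_one⟩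
    h2.continuous.continuousOn h1.continuous.neg.continuousOn
    (fun x _ => (h2.differentiable one_ne_zero x).hasFDerivAt)
    (fun x _ => (h1.differentiable one_ne_zero x).hasFDerivAt.neg) hint]
  simp [hbottom, hleft]

end Periodicity

section Energy

/-- The Yang–Mills–Higgs energy density, whose integral over `[0,1]²` is `energy` by `rfl`. -/
def energyDensity (ε : ℝ) (u : ℝ × ℝ → ℂ) (A1 A2 : ℝ × ℝ → ℝ) (x : ℝ × ℝ) : ℝ :=
  ε ^ 2 * curv A1 A2 x ^ 2 + ‖D1 A1 u x‖ ^ 2 + ‖D2 A2 u x‖ ^ 2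
    + (1 - ‖u x‖ ^ 2) ^ 2 / (4 * ε ^ 2)

theorem energy_nonneg (ε : ℝ) (u : ℝ × ℝ → ℂ) (A1 A2 : ℝ × ℝ → ℝ) : 0 ≤ energy ε u A1 A2 :=
  integral_nonneg fun _ => by positivity

theorem continuous_uncurry_energyDensity {T : Type*} [NormedAddCommGroup T] [NormedSpace ℝ T]
    (ε : ℝ) {u : T → ℝ × ℝ → ℂ} {A1 A2 : T → ℝ × ℝ → ℝ} (hu : ContDiff ℝ 1 (uncurry u))
    (hA1 : ContDiff ℝ 1 (uncurry A1)) (hA2 : ContDiff ℝ 1 (uncurry A2)) :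
    Continuous (uncurry fun t => energyDensity ε (u t) (A1 t) (A2 t)) := by
  have h01 : (0 : WithTop ℕ∞) + 1 ≤ 1 := (zero_add 1).le
  have hF := (contDiff_uncurry_fderiv_apply hA2 h01 (1, 0)).continuous.sub
    (contDiff_uncurry_fderiv_apply hA1 h01 (0, 1)).continuous
  have hD1 := (contDiff_uncurry_covDeriv (hA1.of_le zero_le_one) hu h01 (1, 0)).continuous
  have hD2 := (contDiff_uncurry_covDeriv (hA2.of_le zero_le_one) hu h01 (0, 1)).continuous
  exact (((continuous_const.mul (hF.pow 2)).add (hD1.norm.pow 2)).add (hD2.norm.pow 2)).add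
    (((continuous_const.sub (hu.continuous.norm.pow 2)).pow 2).div_const _)

theorem continuous_energyDensity (ε : ℝ) {u : ℝ × ℝ → ℂ} {A1 A2 : ℝ × ℝ → ℝ}
    (hu : ContDiff ℝ 1 u) (hA1 : ContDiff ℝ 1 A1) (hA2 : ContDiff ℝ 1 A2) :
    Continuous (energyDensity ε u A1 A2) :=
  (continuous_uncurry_energyDensity (T := ℝ) ε (u := fun _ => u) (A1 := fun _ => A1)
    (A2 := fun _ => A2) (hu.comp contDiff_snd) (hA1.comp contDiff_snd)
    (hA2.comp contDiff_snd)).comp (Continuous.prodMk_right 0)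

theorem continuous_energy {T : Type*} [NormedAddCommGroup T] [NormedSpace ℝ T]
    [LocallyCompactSpace T] (ε : ℝ) {u : T → ℝ × ℝ → ℂ} {A1 A2 : T → ℝ × ℝ → ℝ}
    (hu : ContDiff ℝ 1 (uncurry u)) (hA1 : ContDiff ℝ 1 (uncurry A1))
    (hA2 : ContDiff ℝ 1 (uncurry A2)) :
    Continuous fun t => energy ε (u t) (A1 t) (A2 t) :=
  continuous_parametric_integral_of_continuous
    (continuous_uncurry_energyDensity ε hu hA1 hA2) (isCompact_Icc.prod isCompact_Icc)

end Energy

section Stability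

theorem iteratedDeriv_two_nonneg_of_isLocalMin {f : ℝ → ℝ} {x : ℝ} (hmin : IsLocalMin f x)
    (hf : ContinuousAt f x) : 0 ≤ iteratedDeriv 2 f x := by
  rw [iteratedDeriv_succ, iteratedDeriv_one]
  by_contra! hneg
  have hmax : IsLocalMax f x := isLocalMax_of_deriv_deriv_neg hneg hmin.deriv_eq_zero hf
  have hconst : f =ᶠ[nhds x] fun _ => f x := by
    filter_upwards [hmin, hmax] with y hge hle using le_antisymm hle hge
  have hzero : deriv (deriv f) x = 0 := by simpa using hconst.deriv.deriv_eq
  exact hneg.ne hzero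

theorem stable_of_forall_energy_le {ε : ℝ} {u : ℝ × ℝ → ℂ} {A1 A2 : ℝ × ℝ → ℝ}
    (hu : ContDiff ℝ 1 u) (hA1 : ContDiff ℝ 1 A1) (hA2 : ContDiff ℝ 1 A2)
    (hmin : ∀ w B1 B2, ContDiff ℝ 1 w → ContDiff ℝ 1 B1 → ContDiff ℝ 1 B2 →
      energy ε u A1 A2 ≤ energy ε w B1 B2) :
    Stable ε u A1 A2 := by
  intro v a1 a2 hv _ ha1 _ ha2 _
  replace hv : ContDiff ℝ 1 v := hv.of_le (mod_cast le_top)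
  replace ha1 : ContDiff ℝ 1 a1 := ha1.of_le (mod_cast le_top)
  replace ha2 : ContDiff ℝ 1 a2 := ha2.of_le (mod_cast le_top)
  refine iteratedDeriv_two_nonneg_of_isLocalMin (Filter.Eventually.of_forall fun t => ?_)
    (Continuous.continuousAt ?_)
  · simpa using hmin _ _ _ (hu.add (hv.const_smul t)) (hA1.add (contDiff_const.mul ha1))
      (hA2.add (contDiff_const.mul ha2))
  · apply continuous_energy <;> simp only [uncurry_def] <;> fun_prop

end Stability

section Vortex

variable {ε s : ℝ} {u : ℝ × ℝ → ℂ} {A1 A2 : ℝ × ℝ → ℝ}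

/-- `D₁u + s i D₂u`, which is `σ₊` for `s = 1` and `σ₋` for `s = -1`. -/
def sigma (s : ℝ) (u : ℝ × ℝ → ℂ) (A1 A2 : ℝ × ℝ → ℝ) (x : ℝ × ℝ) : ℂ :=
  D1 A1 u x + s * I * D2 A2 u x

/-- The vortex equations for `s = 1` and the anti-vortex equations for `s = -1`. -/
def IsVortex (s ε : ℝ) (u : ℝ × ℝ → ℂ) (A1 A2 : ℝ × ℝ → ℝ) : Prop :=
  ∀ x, sigma s u A1 A2 x = 0 ∧ curv A1 A2 x = s * hfun ε u x

theorem exists_isVortex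
    (hvortex : (∀ x, sigP u A1 A2 x = 0 ∧ curv A1 A2 x = hfun ε u x) ∨
      (∀ x, sigM u A1 A2 x = 0 ∧ curv A1 A2 x = -hfun ε u x)) :
    ∃ s : ℝ, s ^ 2 = 1 ∧ IsVortex s ε u A1 A2 := by
  rcases hvortex with hplus | hminus
  · exact ⟨1, one_pow 2, fun x => by simpa [sigma, sigP] using hplus x⟩
  · exact ⟨-1, neg_one_sq, fun x => by simpa [sigma, sigM, sub_eq_add_neg] using hminus x⟩

theorem norm_add_mul_I_mul_sq (hs : s ^ 2 = 1) (z w : ℂ) :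
    ‖z + s * I * w‖ ^ 2 = ‖z‖ ^ 2 + ‖w‖ ^ 2 - 2 * s * (conj z * w).im := by
  simp only [← normSq_eq_norm_sq, normSq_apply, add_re, add_im, mul_re, mul_im, conj_re, conj_im,
    I_re, I_im, ofReal_re, ofReal_im]
  linear_combination (w.re ^ 2 + w.im ^ 2) * hs

theorem energyDensity_eq_bogomolny (hε : ε ≠ 0) (hs : s ^ 2 = 1) (hu : ContDiff ℝ 2 u)
    (hA1 : ContDiff ℝ 1 A1) (hA2 : ContDiff ℝ 1 A2) (x : ℝ × ℝ) :
    energyDensity ε u A1 A2 x =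
      ‖sigma s u A1 A2 x‖ ^ 2 + ε ^ 2 * (curv A1 A2 x - s * hfun ε u x) ^ 2 +
        s * (curv A1 A2 x + curv (current A1 (1, 0) u) (current A2 (0, 1) u) x) := by
  have hcurl : curv (current A1 (1, 0) u) (current A2 (0, 1) u) x =
      2 * (conj (D1 A1 u x) * D2 A2 u x).im - curv A1 A2 x * ‖u x‖ ^ 2 :=
    fderiv_current_sub_fderiv_current hA1 hA2 hu (1, 0) (0, 1) x
  have hh : 1 - ‖u x‖ ^ 2 = 2 * ε ^ 2 * hfun ε u x := by
    rw [hfun]; field_simp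
  have hpotential : (1 - ‖u x‖ ^ 2) ^ 2 / (4 * ε ^ 2) = ε ^ 2 * hfun ε u x ^ 2 := by
    rw [hh]; field_simp; ring
  rw [energyDensity, sigma, norm_add_mul_I_mul_sq hs, hcurl, hpotential]
  linear_combination -(ε ^ 2 * hfun ε u x ^ 2) * hs - s * curv A1 A2 x * hh

theorem energy_eq_integral_bogomolny (hε : ε ≠ 0) (hs : s ^ 2 = 1)
    (hu : ContDiff ℝ 2 u) (hup : Periodic2 u) (hA1 : ContDiff ℝ 1 A1) (hA1p : Periodic2 A1)
    (hA2 : ContDiff ℝ 1 A2) (hA2p : Periodic2 A2) :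
    energy ε u A1 A2 = ∫ x in Icc (0 : ℝ) 1 ×ˢ Icc (0 : ℝ) 1,
      (‖sigma s u A1 A2 x‖ ^ 2 + ε ^ 2 * (curv A1 A2 x - s * hfun ε u x) ^ 2) := by
  have hj1 := contDiff_current hA1 hu one_add_one_eq_two.le (1, 0)
  have hj2 := contDiff_current hA2 hu one_add_one_eq_two.le (0, 1)
  have hF := integrableOn_unit_square (continuous_curv hA1 hA2)
  have hj := integrableOn_unit_square (continuous_curv hj1 hj2)
  have he := integrableOn_unit_square
    (continuous_energyDensity ε (hu.of_le one_le_two) hA1 hA2)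
  have htop : ∫ x in Icc (0 : ℝ) 1 ×ˢ Icc (0 : ℝ) 1,
      s * (curv A1 A2 x + curv (current A1 (1, 0) u) (current A2 (0, 1) u) x) = 0 := by
    rw [integral_const_mul, integral_add hF hj, integral_curv_eq_zero hA1 hA2 hA1p hA2p,
      integral_curv_eq_zero hj1 hj2 (periodic2_current hA1p hup _) (periodic2_current hA2p hup _),
      add_zero, mul_zero]
  calc energy ε u A1 A2
      = ∫ x in Icc (0 : ℝ) 1 ×ˢ Icc (0 : ℝ) 1, (energyDensity ε u A1 A2 x -
          s * (curv A1 A2 x + curv (current A1 (1, 0) u) (current A2 (0, 1) u) x)) := by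
        rw [integral_sub he ((hF.fun_add hj).const_mul s), htop, sub_zero]; rfl
    _ = _ := by
        congr with x
        rw [energyDensity_eq_bogomolny hε hs hu hA1 hA2, add_sub_cancel_right]

theorem energy_eq_zero_of_isVortex (hε : ε ≠ 0) (hs : s ^ 2 = 1)
    (hu : ContDiff ℝ 2 u) (hup : Periodic2 u) (hA1 : ContDiff ℝ 1 A1) (hA1p : Periodic2 A1)
    (hA2 : ContDiff ℝ 1 A2) (hA2p : Periodic2 A2) (hvortex : IsVortex s ε u A1 A2) :
    energy ε u A1 A2 = 0 := by
  rw [energy_eq_integral_bogomolny hε hs hu hup hA1 hA1p hA2 hA2p]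
  simp [(hvortex _).1, (hvortex _).2]

theorem D1_eq_of_sigma_eq_zero (hσ : ∀ x, sigma s u A1 A2 x = 0) :
    D1 A1 u = fun x => -(s * I) * D2 A2 u x :=
  funext fun x => by linear_combination (sigma.eq_def s u A1 A2 x).symm.trans (hσ x)

theorem D2_eq_of_sigma_eq_zero (hs : s ^ 2 = 1) (hσ : ∀ x, sigma s u A1 A2 x = 0) :
    D2 A2 u = fun x => s * I * D1 A1 u x := by
  have hsC : (s : ℂ) ^ 2 = 1 := mod_cast hs
  funext x
  rw [D1_eq_of_sigma_eq_zero hσ]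
  linear_combination -D2 A2 u x * hsC + s ^ 2 * D2 A2 u x * I_sq

theorem covariant_laplacian_of_sigma_eq_zero (hs : s ^ 2 = 1) (hu : ContDiff ℝ 2 u)
    (hA1 : Differentiable ℝ A1) (hA2 : Differentiable ℝ A2)
    (hσ : ∀ x, sigma s u A1 A2 x = 0) (x : ℝ × ℝ) :
    D1 A1 (D1 A1 u) x + D2 A2 (D2 A2 u) x = -(s * curv A1 A2 x * u x) := by
  have hcomm : D1 A1 (D2 A2 u) x - D2 A2 (D1 A1 u) x = -I * curv A1 A2 x * u x := by
    rw [curv, ofReal_sub]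
    exact covDeriv_commutator (hA1 x) (hA2 x) hu (1, 0) (0, 1)
  have h11 : D1 A1 (D1 A1 u) x = -(s * I) * D1 A1 (D2 A2 u) x := by
    conv_lhs => rw [D1_eq_of_sigma_eq_zero hσ]
    exact covDeriv_const_mul A1 (1, 0) _ _ x
  have h22 : D2 A2 (D2 A2 u) x = s * I * D2 A2 (D1 A1 u) x := by
    conv_lhs => rw [D2_eq_of_sigma_eq_zero hs hσ]
    exact covDeriv_const_mul A2 (0, 1) _ _ x
  rw [h11, h22]
  linear_combination -(s * I) * hcomm + s * curv A1 A2 x * u x * I_sq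

theorem sq_mul_fderiv_hfun (hε : ε ≠ 0) {x : ℝ × ℝ} (hu : DifferentiableAt ℝ u x)
    (a : ℝ × ℝ → ℝ) (e : ℝ × ℝ) :
    ε ^ 2 * fderiv ℝ (hfun ε u) x e = -(conj (u x) * covDeriv a e u x).re := by
  have hfun_eq : hfun ε u = fun y => (2 * ε ^ 2)⁻¹ * (1 - ‖u y‖ ^ 2) :=
    funext fun y => div_eq_inv_mul _ _
  rw [hfun_eq, fderiv_const_mul (hu.norm_sq ℝ |>.const_sub 1), fderiv_const_sub]
  simp only [smul_apply, neg_apply, smul_eq_mul,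
    fderiv_norm_sq_eq_covDeriv hu a e]
  field_simp

theorem im_mul_ofReal_mul_I_mul (s : ℝ) (z w : ℂ) : (z * (s * I * w)).im = s * (z * w).re := by
  rw [show z * (s * I * w) = s * (I * (z * w)) by ring, im_ofReal_mul, I_mul_im]

theorem isYMH_of_isVortex (hε : ε ≠ 0) (hs : s ^ 2 = 1) (hu : ContDiff ℝ 2 u)
    (hA1 : Differentiable ℝ A1) (hA2 : Differentiable ℝ A2) (hvortex : IsVortex s ε u A1 A2) :
    IsYMH ε u A1 A2 := by
  have hσ (x) : sigma s u A1 A2 x = 0 := (hvortex x).1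
  have hF : curv A1 A2 = fun x => s * hfun ε u x := funext fun x => (hvortex x).2
  have hdF (a : ℝ × ℝ → ℝ) (e x : ℝ × ℝ) : ε ^ 2 * fderiv ℝ (curv A1 A2) x e =
      -s * (conj (u x) * covDeriv a e u x).re := by
    have hscale : fderiv ℝ (fun y => s * hfun ε u y) = s • fderiv ℝ (hfun ε u) :=
      fderiv_const_smul_field s
    have hh := sq_mul_fderiv_hfun hε (hu.differentiable two_ne_zero x) a e
    simp only [hF, hscale, Pi.smul_apply, smul_apply, smul_eq_mul]
    linear_combination s * hh
  refine ⟨fun x => ?_, fun x => ?_, fun x => ?_⟩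
  · have hsC : (s : ℂ) ^ 2 = 1 := mod_cast hs
    rw [covariant_laplacian_of_sigma_eq_zero hs hu hA1 hA2 hσ, hF]
    push_cast
    linear_combination hfun ε u x * u x * hsC
  · simp only [D1_eq_of_sigma_eq_zero hσ, neg_mul, mul_neg, neg_im, im_mul_ofReal_mul_I_mul]
    exact (hdF A2 (0, 1) x).trans (neg_mul _ _)
  · simp only [D2_eq_of_sigma_eq_zero hs hσ, im_mul_ofReal_mul_I_mul]
    exact (hdF A1 (1, 0) x).trans (neg_mul _ _)

end Vortex

theorem vortex_solutions_minimize_and_are_stable_general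
    {ε : ℝ} (hε : ε ≠ 0) {u : ℝ × ℝ → ℂ} {A1 A2 : ℝ × ℝ → ℝ}
    (hu : ContDiff ℝ 2 u) (hup : Periodic2 u)
    (hA1 : ContDiff ℝ 1 A1) (hA1p : Periodic2 A1)
    (hA2 : ContDiff ℝ 1 A2) (hA2p : Periodic2 A2)
    (hvortex :
      (∀ x, sigP u A1 A2 x = 0 ∧ curv A1 A2 x = hfun ε u x) ∨
      (∀ x, sigM u A1 A2 x = 0 ∧ curv A1 A2 x = -hfun ε u x)) :
    IsYMH ε u A1 A2 ∧
    energy ε u A1 A2 = 0 ∧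
    (∀ w B1 B2, ContDiff ℝ 1 w → ContDiff ℝ 1 B1 → ContDiff ℝ 1 B2 →
      energy ε u A1 A2 ≤ energy ε w B1 B2) ∧
    Stable ε u A1 A2 := by
  obtain ⟨s, hs, hvortex⟩ := exists_isVortex hvortex
  have hYMH : IsYMH ε u A1 A2 := isYMH_of_isVortex hε hs hu
    (hA1.differentiable one_ne_zero) (hA2.differentiable one_ne_zero) hvortex
  have hzero : energy ε u A1 A2 = 0 :=
    energy_eq_zero_of_isVortex hε hs hu hup hA1 hA1p hA2 hA2p hvortex
  have hmin : ∀ w B1 B2, ContDiff ℝ 1 w → ContDiff ℝ 1 B1 → ContDiff ℝ 1 B2 →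
      energy ε u A1 A2 ≤ energy ε w B1 B2 :=
    fun w B1 B2 _ _ _ => hzero.trans_le (energy_nonneg ε w B1 B2)
  exact ⟨hYMH, hzero, hmin, stable_of_forall_energy_le (hu.of_le one_le_two) hA1 hA2 hmin⟩

/-- Vortex (or anti-vortex) solutions solve the Yang--Mills--Higgs equations, have zero
energy, minimize the energy among all periodic configurations, and are stable. -/
theorem vortex_solutions_minimize_and_are_stable
    (ε : ℝ) (hε : 0 < ε) (u : ℝ × ℝ → ℂ) (A1 A2 : ℝ × ℝ → ℝ)
    (hu : ContDiff ℝ (⊤ : ℕ∞) u) (hup : Periodic2 u)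
    (hA1 : ContDiff ℝ (⊤ : ℕ∞) A1) (hA1p : Periodic2 A1)
    (hA2 : ContDiff ℝ (⊤ : ℕ∞) A2) (hA2p : Periodic2 A2)
    (hvortex :
      (∀ x, sigP u A1 A2 x = 0 ∧ curv A1 A2 x = hfun ε u x) ∨
      (∀ x, sigM u A1 A2 x = 0 ∧ curv A1 A2 x = -hfun ε u x)) :
    IsYMH ε u A1 A2 ∧
    energy ε u A1 A2 = 0 ∧
    (∀ w : ℝ × ℝ → ℂ, ∀ B1 B2 : ℝ × ℝ → ℝ,
      ContDiff ℝ (⊤ : ℕ∞) w → Periodic2 w → ContDiff ℝ (⊤ : ℕ∞) B1 → Periodic2 B1 →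
      ContDiff ℝ (⊤ : ℕ∞) B2 → Periodic2 B2 →
      energy ε u A1 A2 ≤ energy ε w B1 B2) ∧
    Stable ε u A1 A2 := by
  have toOne {E : Type} [NormedAddCommGroup E] [NormedSpace ℝ E] {f : ℝ × ℝ → E}
      (hf : ContDiff ℝ (⊤ : ℕ∞) f) : ContDiff ℝ 1 f := hf.of_le (mod_cast le_top)
  obtain ⟨hYMH, hzero, hmin, hstable⟩ := vortex_solutions_minimize_and_are_stable_general hε.ne'
    (hu.of_le (WithTop.coe_le_coe.2 le_top)) hup (toOne hA1) hA1p (toOne hA2) hA2p hvortex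
  exact ⟨hYMH, hzero, fun w B1 B2 hw _ hB1 _ hB2 _ =>
    hmin w B1 B2 (toOne hw) (toOne hB1) (toOne hB2), hstable⟩
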